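/- Suppose g(r) = o(r^{-c}) as r → ∞ for some c > d. Then almost surely, limsup_{n→∞} (α n d_n^d)/(log n) ≤ 1. -/

import Mathlib

open MeasureTheory ProbabilityTheory Filter Set

noncomputable section

namespace RCM

/-- The toroidal metric on the unit cube. -/
def torusDist {d : ℕ} (x y : EuclideanSpace ℝ (Fin d)) : ℝ :=
  ⨅ z : Fin d → ℤ, ‖x - y - (WithLp.equiv 2 (Fin d → ℝ)).symm (fun i => (z i : ℝ))‖

/-- The half-open unit cube `S = (-1/2, 1/2]^d`. -/
def cube (d : ℕ) : Set (EuclideanSpace ℝ (Fin d)) :=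
  {x | ∀ i, x i ∈ Set.Ioc (-(1/2) : ℝ) (1/2)}

/-- The random connection model: i.i.d. uniform points `X`, coupled Poisson counts `N`,
i.i.d. uniform edge variables `U`, with the three families mutually independent, and a
non-increasing connection function `g : [0,∞) → [0,1]` with finite positive integral `α`. -/
structure Model (d : ℕ) {Ω : Type*} [MeasurableSpace Ω] (P : Measure Ω) where
  g : ℝ → ℝ
  α : ℝ
  X : ℕ → Ω → EuclideanSpace ℝ (Fin d)
  N : ℕ → Ω → ℕ
  U : ℕ → ℕ → Ω → ℝ
  g_antitone : AntitoneOn g (Set.Ici 0)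
  g_mem : ∀ r : ℝ, 0 ≤ r → g r ∈ Set.Icc (0 : ℝ) 1
  g_integrable : MeasureTheory.Integrable (fun x : EuclideanSpace ℝ (Fin d) => g ‖x‖)
  α_def : α = ∫ x : EuclideanSpace ℝ (Fin d), g ‖x‖
  α_pos : 0 < α
  X_meas : ∀ i, Measurable (X i)
  X_unif : ∀ i : ℕ, 1 ≤ i → Measure.map (X i) P = volume.restrict (cube d)
  X_indep : iIndepFun
    (fun i : {i : ℕ // 1 ≤ i} => X i) P
  N_meas : ∀ n, Measurable (N n)
  N_mono : ∀ ω, Monotone fun n => N n ω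
  N_poisson : ∀ n k : ℕ,
    P {ω | N n ω = k} = ENNReal.ofReal (Real.exp (-(n : ℝ)) * (n : ℝ) ^ k / k.factorial)
  U_meas : ∀ i j, Measurable (U i j)
  U_unif : ∀ i j : ℕ, 1 ≤ i → i < j →
    Measure.map (U i j) P = volume.restrict (Set.Icc (0 : ℝ) 1)
  U_indep : iIndepFun
    (fun p : {p : ℕ × ℕ // 1 ≤ p.1 ∧ p.1 < p.2} => U p.1.1 p.1.2) P
  families_indep : iIndep
    (![MeasurableSpace.comap (fun ω => fun i : ℕ => X i ω) inferInstance,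
       MeasurableSpace.comap (fun ω => fun n : ℕ => N n ω) inferInstance,
       MeasurableSpace.comap (fun ω => fun p : ℕ × ℕ => U p.1 p.2 ω) inferInstance]) P

variable {d : ℕ} {Ω : Type*} [MeasurableSpace Ω] {P : Measure Ω}

/-- Adjacency in the graph `G_n(r)`: vertices `1 ≤ i,j ≤ N_n` are joined iff
`U_{ij} ≤ g(dist(X_i,X_j)/r)`. -/
def adj (M : Model d P) (n : ℕ) (r : ℝ) (ω : Ω) (i j : ℕ) : Prop :=
  i ≠ j ∧ 1 ≤ i ∧ 1 ≤ j ∧ i ≤ M.N n ω ∧ j ≤ M.N n ω ∧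
    M.U (min i j) (max i j) ω ≤ M.g (torusDist (M.X i ω) (M.X j ω) / r)

/-- The degree of vertex `i` in `G_n(r)`. -/
def deg (M : Model d P) (n : ℕ) (r : ℝ) (ω : Ω) (i : ℕ) : ℕ :=
  {j : ℕ | adj M n r ω i j}.ncard

/-- `W_n(r)`, the number of isolated vertices of `G_n(r)`. -/
def isolatedCount (M : Model d P) (n : ℕ) (r : ℝ) (ω : Ω) : ℕ :=
  {i : ℕ | 1 ≤ i ∧ i ≤ M.N n ω ∧ deg M n r ω i = 0}.ncard


/-- `r̂_n(γ)` defined by `r̂_n(γ)^d = γ log n / (α n)`. -/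
def rhat (M : Model d P) (γ : ℝ) (n : ℕ) : ℝ :=
  (γ * Real.log n / (M.α * n)) ^ ((1 : ℝ) / d)

/-- `d_n`, the critical parameter for absence of isolated nodes. -/
def critRadius (M : Model d P) (n : ℕ) (ω : Ω) : ℝ :=
  sInf {r : ℝ | 0 < r ∧ isolatedCount M n r ω = 0}

/-- The maximum vertex degree `Δ_n` of `G_n(r)`. -/
def maxDeg (M : Model d P) (n : ℕ) (r : ℝ) (ω : Ω) : ℕ :=
  (Finset.Icc 1 (M.N n ω)).sup (deg M n r ω)

/-- The minimum vertex degree `δ_n` of `G_n(r)`. -/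
def minDeg (M : Model d P) (n : ℕ) (r : ℝ) (ω : Ω) : ℕ :=
  sInf {k : ℕ | ∃ i, 1 ≤ i ∧ i ≤ M.N n ω ∧ deg M n r ω i = k}

/-- The length (toroidal metric) of the longest edge of `G_n(r)` (`0` if there are no edges). -/
def longestEdge (M : Model d P) (n : ℕ) (r : ℝ) (ω : Ω) : ℝ :=
  sSup ({0} ∪ {t : ℝ | ∃ i j, adj M n r ω i j ∧ t = torusDist (M.X i ω) (M.X j ω)})

/-- Connectivity of `G_n(r)`: any two vertices are joined by a path. -/
def connectedGraph (M : Model d P) (n : ℕ) (r : ℝ) (ω : Ω) : Prop :=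
  ∀ i j : ℕ, 1 ≤ i → i ≤ M.N n ω → 1 ≤ j → j ≤ M.N n ω →
    Relation.ReflTransGen (adj M n r ω) i j

/-- `H(x) = 1 - x + x log x` (with `H(0) = 1`, since `log 0 = 0` in Lean). -/
def H (x : ℝ) : ℝ := 1 - x + x * Real.log x

/-- The inverse of the restriction of `H` to `[1, ∞)`. -/
def Hplusinv (y : ℝ) : ℝ := sInf {x : ℝ | 1 ≤ x ∧ y ≤ H x}

/-- The inverse of the restriction of `H` to `[0, 1]`. -/
def Hminusinv (y : ℝ) : ℝ := sInf {x : ℝ | 0 ≤ x ∧ H x ≤ y}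

/-- The standard normal distribution function. -/
def stdNormalCDF (x : ℝ) : ℝ :=
  ∫ t in Set.Iic x, Real.exp (-t ^ 2 / 2) / Real.sqrt (2 * Real.pi)

/-!
Fix `γ > 1`. Given its position, a vertex fails to be joined to any of `m` others with probability
`(1 - p) ^ m ≤ exp (-p m)`, where `p` is the integral of `g (dist x y / r)` over `y` in the torus.
Integrating over the fundamental domain centred at `x` shows `p ≥ ρ α r ^ d` for any `ρ < 1` once
`r` is small, so at `r = rhat M γ v` the expected number of vertices among the first `2 v` having no
neighbour among the first `≈ ρ v` is of order `v ^ (1 - ρ ^ 3 γ)`; the third factor `ρ` absorbs the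
passage between consecutive powers below. For `ρ ^ 3 γ > 1` this is summable along `v = k ^ a` with
`a` large, and Borel-Cantelli applies along that subsequence. By Poisson tail bounds `N n` is
eventually between `ρ n` and `2 n`. For `n` between consecutive `a`-th powers, `N n` is monotone and
`rhat M γ n` is decreasing, so almost surely `critRadius M n ≤ rhat M γ n` eventually.
-/

section Torus

/-- The half-open unit cube centred at `a`, a translate of `cube d`; integrals of periodic functions
do not depend on the choice of `a`. -/
def cubeAt (a : EuclideanSpace ℝ (Fin d)) : Set (EuclideanSpace ℝ (Fin d)) :=
  WithLp.ofLp ⁻¹' univ.pi fun i => Ioc (a i - 1 / 2) (a i + 1 / 2)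

lemma mem_cubeAt {a x : EuclideanSpace ℝ (Fin d)} :
    x ∈ cubeAt a ↔ ∀ i, x i ∈ Ioc (a i - 1 / 2) (a i + 1 / 2) := by
  simp only [cubeAt, mem_preimage, mem_univ_pi]

lemma cubeAt_zero : cubeAt (0 : EuclideanSpace ℝ (Fin d)) = cube d := by
  ext x
  simp [mem_cubeAt, cube]

lemma measurableSet_cubeAt (a : EuclideanSpace ℝ (Fin d)) : MeasurableSet (cubeAt a) :=
  (PiLp.volume_preserving_ofLp (Fin d)).measurable
    (MeasurableSet.univ_pi fun _ => measurableSet_Ioc)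

lemma volume_cubeAt (a : EuclideanSpace ℝ (Fin d)) : volume (cubeAt a) = 1 := by
  rw [cubeAt, (PiLp.volume_preserving_ofLp (Fin d)).measure_preimage
    (MeasurableSet.univ_pi fun _ => measurableSet_Ioc).nullMeasurableSet, volume_pi_pi]
  norm_num [Real.volume_Ioc]

instance : IsProbabilityMeasure (volume.restrict (cube d)) :=
  ⟨by rw [Measure.restrict_apply_univ, ← cubeAt_zero, volume_cubeAt]⟩

lemma ball_subset_cubeAt (a : EuclideanSpace ℝ (Fin d)) {s : ℝ} (hs : s ≤ 1 / 2) :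
    Metric.ball a s ⊆ cubeAt a := by
  intro x hx
  refine mem_cubeAt.2 fun i => ?_
  have hcoord : |x i - a i| < s :=
    (PiLp.norm_apply_le (x - a) i).trans_lt (mem_ball_iff_norm.1 hx)
  constructor <;> linarith [abs_lt.1 hcoord]

/-- The inclusion of the integer lattice in Euclidean space; its range acts on `ℝ^d` by
translations, with quotient the torus. -/
def latticeHom (d : ℕ) : (Fin d → ℤ) →+ EuclideanSpace ℝ (Fin d) where
  toFun z := (WithLp.equiv 2 (Fin d → ℝ)).symm (fun i => (z i : ℝ))
  map_zero' := by ext; simp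
  map_add' x y := by ext; simp

instance : Countable (latticeHom d).range :=
  (countable_range (latticeHom d)).to_subtype

lemma isAddFundamentalDomain_cubeAt (a : EuclideanSpace ℝ (Fin d)) :
    IsAddFundamentalDomain (latticeHom d).range (cubeAt a) volume := by
  refine IsAddFundamentalDomain.mk' (measurableSet_cubeAt a).nullMeasurableSet fun x => ?_
  have hmem (z : Fin d → ℤ) : latticeHom d z + x ∈ cubeAt a ↔
      ∀ i, x i + z i • (1 : ℝ) ∈ Ioc (a i - 1 / 2) (a i - 1 / 2 + 1) := by
    have hright (i : Fin d) : a i - 1 / 2 + 1 = a i + 1 / 2 := by ring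
    simp only [mem_cubeAt, hright, zsmul_one, add_comm (x _)]
    rfl
  choose z hz huniq using fun i => existsUnique_add_zsmul_mem_Ioc one_pos (x i) (a i - 1 / 2)
  refine ⟨⟨latticeHom d z, z, rfl⟩, (hmem z).2 hz, ?_⟩
  rintro ⟨_, w, rfl⟩ hw
  obtain rfl : w = z := funext fun i => huniq i (w i) ((hmem w).1 hw i)
  rfl

lemma torusDist_nonneg (x y : EuclideanSpace ℝ (Fin d)) : 0 ≤ torusDist x y :=
  Real.iInf_nonneg fun _ => norm_nonneg _

lemma torusDist_le_norm_sub (x y : EuclideanSpace ℝ (Fin d)) : torusDist x y ≤ ‖x - y‖ := by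
  have hbdd : BddBelow (range fun z => ‖x - y - latticeHom d z‖) :=
    ⟨0, forall_mem_range.2 fun _ => norm_nonneg _⟩
  have h : torusDist x y ≤ ‖x - y - latticeHom d 0‖ := ciInf_le hbdd 0
  rwa [map_zero, sub_zero] at h

lemma torusDist_vadd_right (x y : EuclideanSpace ℝ (Fin d)) (w : (latticeHom d).range) :
    torusDist x (w +ᵥ y) = torusDist x y := by
  obtain ⟨_, w, rfl⟩ := w
  refine (Equiv.addRight w).iInf_congr fun z => ?_
  change ‖x - y - latticeHom d (z + w)‖ = ‖x - (latticeHom d w + y) - latticeHom d z‖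
  rw [map_add]
  congr 1
  abel

@[fun_prop]
lemma measurable_torusDist {β : Type*} [MeasurableSpace β] {u v : β → EuclideanSpace ℝ (Fin d)}
    (hu : Measurable u) (hv : Measurable v) : Measurable fun w => torusDist (u w) (v w) :=
  Measurable.iInf fun _ => ((hu.sub hv).sub_const _).norm

lemma setIntegral_cubeAt_comp_torusDist {F : Type*} [NormedAddCommGroup F] [NormedSpace ℝ F]
    (f : ℝ → F) (x a b : EuclideanSpace ℝ (Fin d)) :
    ∫ y in cubeAt a, f (torusDist x y) = ∫ y in cubeAt b, f (torusDist x y) :=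
  (isAddFundamentalDomain_cubeAt a).setIntegral_eq (isAddFundamentalDomain_cubeAt b) fun w y => by
    rw [torusDist_vadd_right]

end Torus

section RadialIntegrals

lemma exists_lt_setIntegral_ball {E : Type*} [PseudoMetricSpace E] [MeasurableSpace E]
    [OpensMeasurableSpace E] {μ : Measure E} {f : E → ℝ} (hf : Integrable f μ) {c : ℝ}
    (hc : c < ∫ u, f u ∂μ) (x : E) : ∃ R > 0, c < ∫ u in Metric.ball x R, f u ∂μ := by
  have hlim : Tendsto (fun n : ℕ => ∫ u in Metric.ball x n, f u ∂μ) atTop (nhds (∫ u, f u ∂μ)) :=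
    (aecover_ball tendsto_natCast_atTop_atTop).integral_tendsto_of_countably_generated hf
  obtain ⟨n, hn, hn0⟩ := ((hlim.eventually_const_lt hc).and (eventually_gt_atTop 0)).exists
  exact ⟨n, Nat.cast_pos.2 hn0, hn⟩

open scoped Pointwise in
lemma setIntegral_ball_comp_inv_smul_sub {E F : Type*} [NormedAddCommGroup E] [NormedSpace ℝ E]
    [MeasurableSpace E] [BorelSpace E] [FiniteDimensional ℝ E] (μ : Measure E) [μ.IsAddHaarMeasure]
    [NormedAddCommGroup F] [NormedSpace ℝ F] (f : E → F) (x : E) {r : ℝ} (hr : 0 < r) (R : ℝ) :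
    ∫ y in Metric.ball x (r * R), f (r⁻¹ • (y - x)) ∂μ =
      r ^ Module.finrank ℝ E • ∫ u in Metric.ball 0 R, f u ∂μ := by
  have hpre : (fun y => y - x) ⁻¹' Metric.ball 0 (r * R) = Metric.ball x (r * R) := by
    ext y
    simp [dist_eq_norm]
  have hball : r⁻¹ • Metric.ball (0 : E) (r * R) = Metric.ball 0 R := by
    rw [smul_ball (inv_ne_zero hr.ne'), smul_zero, norm_inv, Real.norm_of_nonneg hr.le,
      inv_mul_cancel_left₀ hr.ne']
  rw [← hpre, (measurePreserving_sub_right μ x).setIntegral_preimage_emb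
      (MeasurableEquiv.subRight x).measurableEmbedding (fun y => f (r⁻¹ • y)),
    Measure.setIntegral_comp_smul_of_pos μ f _ (inv_pos.2 hr), hball, inv_pow, inv_inv]

variable {g : ℝ → ℝ}

lemma measurable_comp_of_antitoneOn_Ici (hg : AntitoneOn g (Ici 0)) {β : Type*} [MeasurableSpace β]
    {f : β → ℝ} (hf : Measurable f) (hf0 : ∀ w, 0 ≤ f w) : Measurable fun w => g (f w) :=
  (antitoneOn_iff_antitone.1 hg).measurable.comp (hf.subtype_mk (h := hf0))

lemma integrableOn_comp_of_antitoneOn_Ici (hg : AntitoneOn g (Ici 0)) (hg0 : ∀ t, 0 ≤ t → 0 ≤ g t)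
    {β : Type*} [MeasurableSpace β] {μ : Measure β} {s : Set β} (hs : μ s ≠ ⊤) {f : β → ℝ}
    (hf : Measurable f) (hf0 : ∀ w, 0 ≤ f w) : IntegrableOn (fun w => g (f w)) s μ :=
  Measure.integrableOn_of_bounded (M := g 0) hs
    (measurable_comp_of_antitoneOn_Ici hg hf hf0).aestronglyMeasurable <| ae_of_all _ fun w => by
      rw [Real.norm_of_nonneg (hg0 _ (hf0 w))]
      exact hg self_mem_Ici (hf0 w) (hf0 w)

lemma pow_mul_setIntegral_ball_le_setIntegral_cube (hg : AntitoneOn g (Ici 0))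
    (hg0 : ∀ t, 0 ≤ t → 0 ≤ g t) {r R : ℝ} (hr : 0 < r) (hrR : r * R ≤ 1 / 2)
    (x : EuclideanSpace ℝ (Fin d)) :
    r ^ d * ∫ u in Metric.ball (0 : EuclideanSpace ℝ (Fin d)) R, g ‖u‖ ≤
      ∫ y in cube d, g (torusDist x y / r) := by
  have hnorm0 (y : EuclideanSpace ℝ (Fin d)) : 0 ≤ ‖r⁻¹ • (y - x)‖ := norm_nonneg _
  have hdist0 (y : EuclideanSpace ℝ (Fin d)) : 0 ≤ torusDist x y / r :=
    div_nonneg (torusDist_nonneg x y) hr.le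
  have hdist_le (y : EuclideanSpace ℝ (Fin d)) : torusDist x y / r ≤ ‖r⁻¹ • (y - x)‖ := by
    rw [norm_smul, norm_inv, Real.norm_of_nonneg hr.le, norm_sub_rev, div_eq_inv_mul]
    gcongr
    exact torusDist_le_norm_sub x y
  have hint {s : Set (EuclideanSpace ℝ (Fin d))} (hs : volume s ≠ ⊤) :
      IntegrableOn (fun y => g (torusDist x y / r)) s :=
    integrableOn_comp_of_antitoneOn_Ici hg hg0 hs (by fun_prop) hdist0
  calc r ^ d * ∫ u in Metric.ball (0 : EuclideanSpace ℝ (Fin d)) R, g ‖u‖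
      = ∫ y in Metric.ball x (r * R), g ‖r⁻¹ • (y - x)‖ := by
        rw [setIntegral_ball_comp_inv_smul_sub volume (fun u => g ‖u‖) x hr R,
          finrank_euclideanSpace_fin, smul_eq_mul]
    _ ≤ ∫ y in Metric.ball x (r * R), g (torusDist x y / r) :=
        setIntegral_mono
          (integrableOn_comp_of_antitoneOn_Ici hg hg0 measure_ball_lt_top.ne (by fun_prop) hnorm0)
          (hint measure_ball_lt_top.ne) fun y => hg (hdist0 y) (hnorm0 y) (hdist_le y)
    _ ≤ ∫ y in cubeAt x, g (torusDist x y / r) :=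
        setIntegral_mono_set (hint (by simp [volume_cubeAt]))
          (ae_of_all _ fun y => hg0 _ (hdist0 y)) (ball_subset_cubeAt x hrR).eventuallyLE
    _ = ∫ y in cube d, g (torusDist x y / r) := by
        rw [← cubeAt_zero]
        exact setIntegral_cubeAt_comp_torusDist (fun t => g (t / r)) x x 0

end RadialIntegrals

section Independence

lemma lintegral_comp_prodMk_of_indepFun [IsFiniteMeasure P] {β γ : Type*} [MeasurableSpace β]
    [MeasurableSpace γ] {ξ : Ω → β} {η : Ω → γ} (hξ : Measurable ξ) (hη : Measurable η)
    (hind : IndepFun ξ η P) {f : β × γ → ENNReal} (hf : Measurable f) :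
    ∫⁻ ω, f (ξ ω, η ω) ∂P = ∫⁻ ω, ∫⁻ ω', f (ξ ω, η ω') ∂P ∂P := by
  have hmap := (indepFun_iff_map_prod_eq_prod_map_map hξ.aemeasurable hη.aemeasurable).1 hind
  rw [← lintegral_map hf (hξ.prodMk hη), hmap, lintegral_prod _ hf.aemeasurable,
    lintegral_map hf.lintegral_prod_right' hξ]
  exact lintegral_congr fun ω => lintegral_map (hf.comp measurable_prodMk_left) hη

variable {ι : Type*} [Fintype ι]

lemma lintegral_prod_le_pow {β γ : Type*} [MeasurableSpace β] [MeasurableSpace γ] {ξ : Ω → β}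
    {η : ι → Ω → γ} (hξ : Measurable ξ) (hη : ∀ i, Measurable (η i)) (hiind : iIndepFun η P)
    (hind : IndepFun ξ (fun ω i => η i ω) P) {f : β → γ → ENNReal}
    (hf : Measurable (Function.uncurry f)) {c : ENNReal}
    (hc : ∀ x i, ∫⁻ ω, f x (η i ω) ∂P ≤ c) :
    ∫⁻ ω, ∏ i, f (ξ ω) (η i ω) ∂P ≤ c ^ Fintype.card ι := by
  have := hiind.isProbabilityMeasure
  have hfx (x : β) : Measurable (f x) := hf.of_uncurry_left
  have hprod : Measurable fun w : β × (ι → γ) => ∏ i, f w.1 (w.2 i) :=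
    Finset.measurable_prod _ fun i _ =>
      hf.comp (measurable_fst.prodMk ((measurable_pi_apply i).comp measurable_snd))
  calc ∫⁻ ω, ∏ i, f (ξ ω) (η i ω) ∂P
      = ∫⁻ ω, ∫⁻ ω', ∏ i, f (ξ ω) (η i ω') ∂P ∂P :=
        lintegral_comp_prodMk_of_indepFun hξ (measurable_pi_lambda _ hη) hind hprod
    _ = ∫⁻ ω, ∏ i, ∫⁻ ω', f (ξ ω) (η i ω') ∂P ∂P :=
        lintegral_congr fun ω => lintegral_prod_eq_prod_lintegral_of_indepFun _ _
          (hiind.comp (fun _ => f (ξ ω)) fun _ => hfx _) fun i => (hfx _).comp (hη i)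
    _ ≤ ∫⁻ _, c ^ Fintype.card ι ∂P :=
        lintegral_mono fun ω => Finset.prod_le_pow_card _ _ _ fun i _ => hc _ i
    _ = c ^ Fintype.card ι := by simp only [lintegral_const, measure_univ, mul_one]

variable {U : ι → Ω → ℝ}

lemma measure_forall_lt_of_uniform (hU : ∀ i, HasLaw (U i) (volume.restrict (Icc 0 1)) P)
    (hiind : iIndepFun U P) {a : ι → ℝ} (ha : ∀ i, a i ∈ Icc (0 : ℝ) 1) :
    P {ω | ∀ i, a i < U i ω} = ∏ i, ENNReal.ofReal (1 - a i) := by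
  have hmarginal (i : ι) : P (U i ⁻¹' Ioi (a i)) = ENNReal.ofReal (1 - a i) := by
    have hinter : Ioi (a i) ∩ Icc 0 1 = Ioc (a i) 1 := by
      ext t
      exact ⟨fun h => ⟨h.1, h.2.2⟩, fun h => ⟨h.1, (ha i).1.trans h.1.le, h.2⟩⟩
    rw [← Real.volume_Ioc, ← hinter, ← Measure.restrict_apply measurableSet_Ioi]
    exact (hU i).measure_eq measurableSet_Ioi
  have hset : {ω | ∀ i, a i < U i ω} = ⋂ i ∈ Finset.univ, U i ⁻¹' Ioi (a i) := by
    ext ω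
    simp
  rw [hset, hiind.measure_inter_preimage_eq_mul _ fun _ _ => measurableSet_Ioi]
  exact Finset.prod_congr rfl fun i _ => hmarginal i

lemma measure_forall_lt_of_indepFun
    (hU : ∀ i, HasLaw (U i) (volume.restrict (Icc 0 1)) P) (hUm : ∀ i, Measurable (U i))
    (hiind : iIndepFun U P) {a : Ω → ι → ℝ} (ham : Measurable a)
    (ha : ∀ ω i, a ω i ∈ Icc (0 : ℝ) 1) (hind : IndepFun a (fun ω i => U i ω) P) :
    P {ω | ∀ i, a ω i < U i ω} = ∫⁻ ω, ∏ i, ENNReal.ofReal (1 - a ω i) ∂P := by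
  have := hiind.isProbabilityMeasure
  have hUm' : Measurable fun ω i => U i ω := measurable_pi_lambda _ hUm
  have hs : MeasurableSet {w : (ι → ℝ) × (ι → ℝ) | ∀ i, w.1 i < w.2 i} := by
    rw [ofPred_forall]
    exact MeasurableSet.iInter fun i => measurableSet_lt (by fun_prop) (by fun_prop)
  calc P {ω | ∀ i, a ω i < U i ω}
      = ∫⁻ ω, {w | ∀ i, w.1 i < w.2 i}.indicator 1 (a ω, fun i => U i ω) ∂P :=
        (lintegral_indicator_one (hs.preimage (ham.prodMk hUm'))).symm
    _ = ∫⁻ ω, ∫⁻ ω', {w | ∀ i, w.1 i < w.2 i}.indicator 1 (a ω, fun i => U i ω') ∂P ∂P :=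
        lintegral_comp_prodMk_of_indepFun ham hUm' hind (measurable_one.indicator hs)
    _ = ∫⁻ ω, P {ω' | ∀ i, a ω i < U i ω'} ∂P :=
        lintegral_congr fun ω =>
          lintegral_indicator_one (hs.preimage (measurable_const.prodMk hUm'))
    _ = ∫⁻ ω, ∏ i, ENNReal.ofReal (1 - a ω i) ∂P :=
        lintegral_congr fun ω => measure_forall_lt_of_uniform hU hiind (ha ω)

end Independence

section AlmostSure

lemma ae_eventually_notMem_of_measureReal_le [IsFiniteMeasure P] {s : ℕ → Set Ω} {b : ℕ → ℝ}
    (hb : Summable b) (hs : ∀ᶠ k in atTop, P.real (s k) ≤ b k) :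
    ∀ᵐ ω ∂P, ∀ᶠ k in atTop, ω ∉ s k := by
  have hsum : Summable fun k => P.real (s k) :=
    hb.of_norm_bounded_eventually_nat <| hs.mono fun k hk => by
      rwa [Real.norm_of_nonneg measureReal_nonneg]
  have hreal (k : ℕ) : P (s k) = ENNReal.ofReal (P.real (s k)) := by rw [ofReal_measureReal]
  refine ae_eventually_notMem ?_
  rw [tsum_congr hreal]
  exact hsum.tsum_ofReal_ne_top

lemma ae_limsup_le_of_forall_lt {u : ℕ → Ω → ℝ} {c : ℝ}
    (hu : ∀ ω, IsCoboundedUnder (· ≤ ·) atTop fun n => u n ω)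
    (h : ∀ y > c, ∀ᵐ ω ∂P, ∀ᶠ n in atTop, u n ω ≤ y) :
    ∀ᵐ ω ∂P, limsup (fun n => u n ω) atTop ≤ c := by
  obtain ⟨y, -, hy, hlim⟩ := exists_seq_strictAnti_tendsto c
  filter_upwards [ae_all_iff.2 fun k => h (y k) (hy k)] with ω hω
  exact ge_of_tendsto' hlim fun k => limsup_le_of_le (hu ω) (hω k)

end AlmostSure

section Poisson

open scoped NNReal

lemma H_pos {x : ℝ} (hx : 0 < x) (hx1 : x ≠ 1) : 0 < H x := by
  have hlog : Real.log x⁻¹ < x⁻¹ - 1 := Real.log_lt_sub_one_of_pos (inv_pos.2 hx) (inv_ne_one.2 hx1)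
  calc 0 < x * (x⁻¹ - 1 - Real.log x⁻¹) := mul_pos hx (sub_pos.2 hlog)
    _ = H x := by
      rw [Real.log_inv, H]
      field_simp
      ring

variable {r : ℝ≥0} {t x : ℝ}

lemma hasSum_exp_mul_poisson (r : ℝ≥0) (t : ℝ) :
    HasSum (fun k : ℕ => Real.exp (-r) * r ^ k / k.factorial * Real.exp (t * k))
      (Real.exp (r * (Real.exp t - 1))) := by
  have h := (NormedSpace.expSeries_div_hasSum_exp (r * Real.exp t)).mul_left (Real.exp (-r))
  rw [← Real.exp_eq_exp_ℝ, ← Real.exp_add] at h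
  have hterm (k : ℕ) : Real.exp (-r) * ((r * Real.exp t) ^ k / k.factorial) =
      Real.exp (-r) * r ^ k / k.factorial * Real.exp (t * k) := by
    rw [mul_comm t, Real.exp_nat_mul]
    ring
  have hsum : -r + r * Real.exp t = r * (Real.exp t - 1) := by ring
  simpa only [hterm, hsum] using h

lemma integrable_exp_mul_poissonMeasure :
    Integrable (fun k : ℕ => Real.exp (t * k)) (poissonMeasure r) := by
  simpa only [integrable_poissonMeasure_iff, Real.norm_of_nonneg (Real.exp_pos _).le] using
    (hasSum_exp_mul_poisson r t).summable

lemma mgf_poissonMeasure :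
    mgf (fun k : ℕ => (k : ℝ)) (poissonMeasure r) t = Real.exp (r * (Real.exp t - 1)) :=
  (hasSum_integral_poissonMeasure integrable_exp_mul_poissonMeasure).unique
    (hasSum_exp_mul_poisson r t)

lemma exp_neg_log_mul_mgf_poissonMeasure (hx : 0 < x) :
    Real.exp (-Real.log x * (x * r)) * mgf (fun k : ℕ => (k : ℝ)) (poissonMeasure r) (Real.log x) =
      Real.exp (-(H x * r)) := by
  rw [mgf_poissonMeasure, Real.exp_log hx, ← Real.exp_add, H]
  ring_nf

lemma poissonMeasure_real_le_mul_le (hx : 0 < x) (hx1 : x ≤ 1) :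
    (poissonMeasure r).real {k | (k : ℝ) ≤ x * r} ≤ Real.exp (-(H x * r)) :=
  (measure_le_le_exp_mul_mgf _ (Real.log_nonpos hx.le hx1)
    integrable_exp_mul_poissonMeasure).trans_eq (exp_neg_log_mul_mgf_poissonMeasure hx)

lemma poissonMeasure_real_mul_le_le (hx1 : 1 ≤ x) :
    (poissonMeasure r).real {k | x * r ≤ (k : ℝ)} ≤ Real.exp (-(H x * r)) :=
  (measure_ge_le_exp_mul_mgf _ (Real.log_nonneg hx1)
    integrable_exp_mul_poissonMeasure).trans_eq
      (exp_neg_log_mul_mgf_poissonMeasure (zero_lt_one.trans_le hx1))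

end Poisson

section PoissonCounts

lemma Model.isProbabilityMeasure (M : Model d P) : IsProbabilityMeasure P :=
  M.X_indep.isProbabilityMeasure

variable (M : Model d P)

lemma Model.hasLaw_N (n : ℕ) : HasLaw (M.N n) (poissonMeasure n) P where
  aemeasurable := (M.N_meas n).aemeasurable
  map_eq := Measure.ext_of_singleton fun k => by
    rw [Measure.map_apply (M.N_meas n) (measurableSet_singleton k), poissonMeasure_singleton]
    exact M.N_poisson n k

lemma summable_exp_neg_mul_natCast {b : ℝ} (hb : 0 < b) :
    Summable fun n : ℕ => Real.exp (-(b * n)) := by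
  simpa only [mul_neg, mul_comm b] using Real.summable_exp_nat_mul_iff.2 (neg_lt_zero.2 hb)

variable {x : ℝ}

lemma Model.ae_eventually_mul_lt_N (hx0 : 0 < x) (hx1 : x < 1) :
    ∀ᵐ ω ∂P, ∀ᶠ n in atTop, x * n < M.N n ω := by
  have := M.isProbabilityMeasure
  have htail (n : ℕ) : P.real {ω | (M.N n ω : ℝ) ≤ x * n} ≤ Real.exp (-(H x * n)) :=
    ((M.hasLaw_N n).measureReal_eq (p := fun k => (k : ℝ) ≤ x * n) .of_discrete).trans_le
      (poissonMeasure_real_le_mul_le hx0 hx1.le)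
  simpa only [mem_ofPred_eq, not_le] using ae_eventually_notMem_of_measureReal_le
    (summable_exp_neg_mul_natCast (H_pos hx0 hx1.ne)) (.of_forall htail)

lemma Model.ae_eventually_N_lt_mul (hx1 : 1 < x) :
    ∀ᵐ ω ∂P, ∀ᶠ n in atTop, M.N n ω < x * n := by
  have := M.isProbabilityMeasure
  have htail (n : ℕ) : P.real {ω | x * n ≤ (M.N n ω : ℝ)} ≤ Real.exp (-(H x * n)) :=
    ((M.hasLaw_N n).measureReal_eq (p := fun k => x * n ≤ (k : ℝ)) .of_discrete).trans_le
      (poissonMeasure_real_mul_le_le hx1.le)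
  simpa only [mem_ofPred_eq, not_le] using ae_eventually_notMem_of_measureReal_le
    (summable_exp_neg_mul_natCast (H_pos (zero_lt_one.trans hx1) hx1.ne')) (.of_forall htail)

end PoissonCounts

section LoneVertices

variable (M : Model d P) {r p : ℝ} {i : ℕ} {T : Finset ℕ}

lemma Model.hasLaw_X (hi : 1 ≤ i) : HasLaw (M.X i) (volume.restrict (cube d)) P :=
  ⟨(M.X_meas i).aemeasurable, M.X_unif i hi⟩

lemma Model.indepFun_X_U :
    IndepFun (fun ω i => M.X i ω) (fun ω (e : ℕ × ℕ) => M.U e.1 e.2 ω) P :=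
  M.families_indep.indep (show (0 : Fin 3) ≠ 2 by decide)

/-- The conditional probability, given the positions, that vertices at `x` and `y` are joined. -/
def Model.edgeProb (M : Model d P) (r : ℝ) (x y : EuclideanSpace ℝ (Fin d)) : ℝ :=
  M.g (torusDist x y / r)

lemma Model.edgeProb_mem_Icc (hr : 0 ≤ r) (x y : EuclideanSpace ℝ (Fin d)) :
    M.edgeProb r x y ∈ Icc (0 : ℝ) 1 :=
  M.g_mem _ (div_nonneg (torusDist_nonneg x y) hr)

lemma Model.measurable_edgeProb (hr : 0 ≤ r) {β : Type*} [MeasurableSpace β]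
    {u v : β → EuclideanSpace ℝ (Fin d)} (hu : Measurable u) (hv : Measurable v) :
    Measurable fun w => M.edgeProb r (u w) (v w) :=
  measurable_comp_of_antitoneOn_Ici M.g_antitone ((measurable_torusDist hu hv).div_const r)
    fun _ => div_nonneg (torusDist_nonneg _ _) hr

lemma Model.exists_mul_pow_le_setIntegral_edgeProb {ρ : ℝ} (hρ : ρ < 1) :
    ∃ r₀ > 0, ∀ r, 0 < r → r ≤ r₀ → ∀ x, ρ * M.α * r ^ d ≤ ∫ y in cube d, M.edgeProb r x y := by
  have hlt : ρ * M.α < ∫ u : EuclideanSpace ℝ (Fin d), M.g ‖u‖ := by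
    rw [← M.α_def]
    exact mul_lt_of_lt_one_left M.α_pos hρ
  obtain ⟨R, hR, hball⟩ := exists_lt_setIntegral_ball M.g_integrable hlt 0
  refine ⟨1 / 2 / R, by positivity, fun r hr hrR x => ?_⟩
  calc ρ * M.α * r ^ d
      ≤ r ^ d * ∫ u in Metric.ball (0 : EuclideanSpace ℝ (Fin d)) R, M.g ‖u‖ := by
        rw [mul_comm]
        gcongr
    _ ≤ ∫ y in cube d, M.edgeProb r x y :=
        pow_mul_setIntegral_ball_le_setIntegral_cube M.g_antitone (fun t ht => (M.g_mem t ht).1) hr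
          ((le_div_iff₀ hR).1 hrR) x

lemma lintegral_ofReal_one_sub {β : Type*} [MeasurableSpace β] {μ : Measure β}
    [IsProbabilityMeasure μ] {f : β → ℝ} (hf : Integrable f μ) (hf1 : ∀ y, f y ≤ 1) :
    ∫⁻ y, ENNReal.ofReal (1 - f y) ∂μ = ENNReal.ofReal (1 - ∫ y, f y ∂μ) := by
  rw [← ofReal_integral_eq_lintegral_ofReal (f := fun y => 1 - f y) ((integrable_const 1).sub hf)
      (ae_of_all _ fun y => sub_nonneg.2 (hf1 y)), integral_sub (integrable_const 1) hf,
    integral_const, probReal_univ, one_smul]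

lemma Model.lintegral_one_sub_edgeProb_X_le (hr : 0 ≤ r) {x : EuclideanSpace ℝ (Fin d)}
    (hp : p ≤ ∫ y in cube d, M.edgeProb r x y) (hi : 1 ≤ i) :
    ∫⁻ ω, ENNReal.ofReal (1 - M.edgeProb r x (M.X i ω)) ∂P ≤ ENNReal.ofReal (1 - p) := by
  have hmeas : Measurable (M.edgeProb r x) :=
    M.measurable_edgeProb hr measurable_const measurable_id
  have hint : IntegrableOn (M.edgeProb r x) (cube d) :=
    integrableOn_comp_of_antitoneOn_Ici M.g_antitone (fun t ht => (M.g_mem t ht).1)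
      (by rw [← cubeAt_zero, volume_cubeAt]; exact ENNReal.one_ne_top)
      ((measurable_torusDist measurable_const measurable_id).div_const r)
      fun y => div_nonneg (torusDist_nonneg x y) hr
  rw [(M.hasLaw_X hi).lintegral_comp (f := fun y => ENNReal.ofReal (1 - M.edgeProb r x y))
      (by fun_prop), lintegral_ofReal_one_sub hint fun y => (M.edgeProb_mem_Icc hr x y).2]
  gcongr

/-- The event that vertex `i` is joined to no vertex of `T` when the parameter is `r`, regardless of
how many of these vertices are present. -/
def Model.noEdge (M : Model d P) (r : ℝ) (i : ℕ) (T : Finset ℕ) : Set Ω :=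
  {ω | ∀ j ∈ T, M.edgeProb r (M.X i ω) (M.X j ω) < M.U (min i j) (max i j) ω}

lemma Model.indepFun_X_restrict (hi : 1 ≤ i) (hT : ∀ j ∈ T, 1 ≤ j) (hiT : i ∉ T) :
    IndepFun (M.X i) (fun ω (j : T) => M.X j ω) P := by
  have hdisj : Disjoint {⟨i, hi⟩} (T.subtype (1 ≤ ·)) := by
    simpa using hiT
  exact (M.X_indep.indepFun_finset _ _ hdisj fun j => M.X_meas j).comp
    (measurable_pi_apply ⟨⟨i, hi⟩, Finset.mem_singleton_self _⟩)
    (measurable_pi_lambda _ fun j : T =>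
      measurable_pi_apply ⟨⟨j, hT j j.2⟩, Finset.mem_subtype.2 j.2⟩)

lemma Model.iIndepFun_X_restrict (hT : ∀ j ∈ T, 1 ≤ j) : iIndepFun (fun j : T => M.X j) P :=
  M.X_indep.precomp (g := fun j : T => ⟨j, hT j j.2⟩) fun _ _ hjk =>
    Subtype.ext (Subtype.mk.inj hjk)

lemma Model.hasLaw_U_min_max {j : ℕ} (hi : 1 ≤ i) (hj : 1 ≤ j) (hij : i ≠ j) :
    HasLaw (M.U (min i j) (max i j)) (volume.restrict (Icc 0 1)) P :=
  ⟨(M.U_meas _ _).aemeasurable, M.U_unif _ _ (le_min hi hj) (min_lt_max.2 hij)⟩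

lemma Model.iIndepFun_U_min_max (hi : 1 ≤ i) (hT : ∀ j ∈ T, 1 ≤ j) (hiT : i ∉ T) :
    iIndepFun (fun j : T => M.U (min i j) (max i j)) P := by
  have hij (j : T) : i ≠ j := fun h => hiT (h ▸ j.2)
  refine M.U_indep.precomp (g := fun j : T =>
    ⟨(min i j, max i j), le_min hi (hT j j.2), min_lt_max.2 (hij j)⟩) fun j k hjk => ?_
  simp only [Subtype.mk.injEq, Prod.mk.injEq] at hjk
  exact Subtype.ext (by omega)

lemma Model.measure_noEdge (hr : 0 ≤ r) (hi : 1 ≤ i) (hT : ∀ j ∈ T, 1 ≤ j) (hiT : i ∉ T) :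
    P (M.noEdge r i T) =
      ∫⁻ ω, ∏ j : T, ENNReal.ofReal (1 - M.edgeProb r (M.X i ω) (M.X j ω)) ∂P := by
  have hij (j : T) : i ≠ j := fun h => hiT (h ▸ j.2)
  have hthreshold : Measurable fun ω (j : T) => M.edgeProb r (M.X i ω) (M.X j ω) :=
    measurable_pi_lambda _ fun j => M.measurable_edgeProb hr (M.X_meas i) (M.X_meas j)
  have hind : IndepFun (fun ω (j : T) => M.edgeProb r (M.X i ω) (M.X j ω))
      (fun ω (j : T) => M.U (min i j) (max i j) ω) P :=
    M.indepFun_X_U.comp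
      (φ := fun (v : ℕ → EuclideanSpace ℝ (Fin d)) (j : T) => M.edgeProb r (v i) (v j))
      (ψ := fun (u : ℕ × ℕ → ℝ) (j : T) => u (min i j, max i j))
      (measurable_pi_lambda _ fun j =>
        M.measurable_edgeProb hr (measurable_pi_apply i) (measurable_pi_apply j.1))
      (by fun_prop)
  have hset : M.noEdge r i T =
      {ω | ∀ j : T, M.edgeProb r (M.X i ω) (M.X j ω) < M.U (min i j) (max i j) ω} := by
    simp only [noEdge, Subtype.forall]
  rw [hset]
  exact measure_forall_lt_of_indepFun (U := fun j : T => M.U (min i j) (max i j))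
    (fun j => M.hasLaw_U_min_max hi (hT j j.2) (hij j)) (fun _ => M.U_meas _ _)
    (M.iIndepFun_U_min_max hi hT hiT) hthreshold (fun _ _ => M.edgeProb_mem_Icc hr _ _) hind

lemma Model.measureReal_noEdge_le (hr : 0 ≤ r) (hp : ∀ x, p ≤ ∫ y in cube d, M.edgeProb r x y)
    (hi : 1 ≤ i) (hT : ∀ j ∈ T, 1 ≤ j) (hiT : i ∉ T) :
    P.real (M.noEdge r i T) ≤ Real.exp (-(p * T.card)) := by
  refine ENNReal.toReal_le_of_le_ofReal (Real.exp_pos _).le ?_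
  calc P (M.noEdge r i T)
      = ∫⁻ ω, ∏ j : T, ENNReal.ofReal (1 - M.edgeProb r (M.X i ω) (M.X j ω)) ∂P :=
        M.measure_noEdge hr hi hT hiT
    _ ≤ ENNReal.ofReal (1 - p) ^ Fintype.card T :=
        lintegral_prod_le_pow (ι := T) (f := fun x y => ENNReal.ofReal (1 - M.edgeProb r x y))
          (M.X_meas i) (fun j => M.X_meas j) (M.iIndepFun_X_restrict hT)
          (M.indepFun_X_restrict hi hT hiT)
          ((M.measurable_edgeProb hr measurable_fst measurable_snd).const_sub 1).ennreal_ofReal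
          fun x j => M.lintegral_one_sub_edgeProb_X_le hr (hp x) (hT j j.2)
    _ ≤ ENNReal.ofReal (Real.exp (-p)) ^ Fintype.card T := by
        gcongr
        exact Real.one_sub_le_exp_neg p
    _ = ENNReal.ofReal (Real.exp (-(p * T.card))) := by
        rw [← ENNReal.ofReal_pow (Real.exp_pos _).le, ← Real.exp_nat_mul, Fintype.card_coe,
          mul_neg, mul_comm]

/-- The event that some vertex `i ≤ L` is joined to none of the other vertices `j ≤ m`. It contains
the event that there is an isolated vertex whenever the number of vertices lies in `[m, L]`. -/
def Model.loneVertexEvent (M : Model d P) (r : ℝ) (L m : ℕ) : Set Ω :=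
  ⋃ i ∈ Finset.Icc 1 L, M.noEdge r i ((Finset.Icc 1 m).erase i)

lemma Model.measureReal_loneVertexEvent_le (hr : 0 ≤ r) (hp0 : 0 ≤ p)
    (hp : ∀ x, p ≤ ∫ y in cube d, M.edgeProb r x y) (L m : ℕ) :
    P.real (M.loneVertexEvent r L m) ≤ L * Real.exp (-(p * (m - 1))) := by
  have hcard (i : ℕ) : (m : ℝ) - 1 ≤ ((Finset.Icc 1 m).erase i).card := by
    have h : m - 1 ≤ ((Finset.Icc 1 m).erase i).card := by
      simpa using Finset.pred_card_le_card_erase (s := Finset.Icc 1 m) (a := i)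
    rw [sub_le_iff_le_add]
    exact_mod_cast Nat.sub_le_iff_le_add.1 h
  calc P.real (M.loneVertexEvent r L m)
      ≤ ∑ i ∈ Finset.Icc 1 L, P.real (M.noEdge r i ((Finset.Icc 1 m).erase i)) :=
        measureReal_biUnion_finset_le _ _
    _ ≤ ∑ _i ∈ Finset.Icc 1 L, Real.exp (-(p * (m - 1))) := by
        refine Finset.sum_le_sum fun i hi => (M.measureReal_noEdge_le hr hp
          (Finset.mem_Icc.1 hi).1 (fun j hj => (Finset.mem_Icc.1 (Finset.mem_of_mem_erase hj)).1)
          (Finset.notMem_erase _ _)).trans ?_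
        gcongr
        exact hcard i
    _ = L * Real.exp (-(p * (m - 1))) := by
        rw [Finset.sum_const, Nat.card_Icc, Nat.add_sub_cancel, nsmul_eq_mul]

end LoneVertices

section CriticalRadius

variable (M : Model d P)

lemma critRadius_nonneg (n : ℕ) (ω : Ω) : 0 ≤ critRadius M n ω :=
  Real.sInf_nonneg fun _ hr => hr.1.le

lemma critRadius_le_of_notMem_loneVertexEvent {r : ℝ} {n m L : ℕ} {ω : Ω} (hr : 0 < r)
    (hm : m ≤ M.N n ω) (hL : M.N n ω ≤ L) (hω : ω ∉ M.loneVertexEvent r L m) :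
    critRadius M n ω ≤ r := by
  refine csInf_le ⟨0, fun _ hs => hs.1.le⟩ ⟨hr, ?_⟩
  refine (ncard_eq_zero ((finite_Iic _).subset fun i hi => hi.2.1)).2
    (eq_empty_of_forall_notMem ?_)
  rintro i ⟨hi1, hiN, hdeg⟩
  have hfin : {j | adj M n r ω i j}.Finite :=
    (finite_Iic (M.N n ω)).subset fun j hj => hj.2.2.2.2.1
  have hnone : {j | adj M n r ω i j} = ∅ := (ncard_eq_zero hfin).1 hdeg
  refine hω (mem_iUnion₂.2 ⟨i, Finset.mem_Icc.2 ⟨hi1, hiN.trans hL⟩, fun j hj => ?_⟩)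
  obtain ⟨hji, hj1, hjm⟩ : j ≠ i ∧ 1 ≤ j ∧ j ≤ m := by simpa using hj
  by_contra hle
  exact eq_empty_iff_forall_notMem.1 hnone j
    ⟨hji.symm, hi1, hj1, hiN, hjm.trans hm, not_lt.1 hle⟩

variable {γ ρ : ℝ}

lemma rhat_pow (hd : d ≠ 0) (hγ : 0 ≤ γ) (n : ℕ) :
    rhat M γ n ^ d = γ * Real.log n / (M.α * n) := by
  have := M.α_pos
  have := Real.log_natCast_nonneg n
  rw [rhat, one_div, Real.rpow_inv_natCast_pow (by positivity) hd]

lemma rhat_pos (hγ : 0 < γ) {n : ℕ} (hn : 2 ≤ n) : 0 < rhat M γ n := by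
  have := M.α_pos
  have : 0 < Real.log n := Real.log_pos (Nat.one_lt_cast.2 hn)
  unfold rhat
  positivity

lemma tendsto_rhat (hd : d ≠ 0) (γ : ℝ) : Tendsto (rhat M γ) atTop (nhds 0) := by
  have hlog : Tendsto (fun n : ℕ => γ * Real.log n / (M.α * n)) atTop (nhds 0) := by
    have h := (Real.isLittleO_log_id_atTop.tendsto_div_nhds_zero.comp
      tendsto_natCast_atTop_atTop).const_mul (γ / M.α)
    simpa only [mul_zero, Function.comp_apply, id_eq, div_mul_div_comm] using h
  have hd' : 0 < (1 : ℝ) / d := by positivity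
  have hroot := hlog.rpow_const (.inr hd'.le)
  rwa [Real.zero_rpow hd'.ne'] at hroot

lemma rhat_le_rhat (hγ : 0 ≤ γ) {m n : ℕ} (hm : 3 ≤ m) (hmn : m ≤ n) :
    rhat M γ n ≤ rhat M γ m := by
  have := M.α_pos
  have hexp : Real.exp 1 ≤ m := Real.exp_one_lt_three.le.trans (by exact_mod_cast hm)
  have hmn' : (m : ℝ) ≤ n := Nat.cast_le.2 hmn
  have hlog : Real.log n / n ≤ Real.log m / m :=
    Real.log_div_self_antitoneOn hexp (hexp.trans hmn') hmn'
  simp only [rhat, mul_div_mul_comm]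
  gcongr

lemma measureReal_loneVertexEvent_rhat_le (hd : d ≠ 0) (hγ : 0 < γ) (hρ : 0 ≤ ρ) {σ : ℝ} {v : ℕ}
    (hv : 2 ≤ v)
    (hp : ∀ x, ρ * M.α * rhat M γ v ^ d ≤ ∫ y in cube d, M.edgeProb (rhat M γ v) x y)
    (L : ℕ) {m : ℕ} (hm : σ * v ≤ m - 1) :
    P.real (M.loneVertexEvent (rhat M γ v) L m) ≤ L * (v : ℝ) ^ (-(ρ * σ * γ)) := by
  have hα := M.α_pos
  have hv0 : (0 : ℝ) < v := by positivity
  have hr := (rhat_pos M hγ hv).le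
  have hexponent : Real.log v * (ρ * σ * γ) ≤ ρ * M.α * rhat M γ v ^ d * (m - 1) :=
    calc Real.log v * (ρ * σ * γ) = ρ * M.α * rhat M γ v ^ d * (σ * v) := by
          rw [rhat_pow M hd hγ.le]
          field_simp
      _ ≤ ρ * M.α * rhat M γ v ^ d * (m - 1) := by gcongr
  calc P.real (M.loneVertexEvent (rhat M γ v) L m)
      ≤ L * Real.exp (-(ρ * M.α * rhat M γ v ^ d * (m - 1))) :=
        M.measureReal_loneVertexEvent_le hr (by positivity) hp L m
    _ ≤ L * Real.exp (-(Real.log v * (ρ * σ * γ))) := by gcongr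
    _ = L * (v : ℝ) ^ (-(ρ * σ * γ)) := by rw [Real.rpow_def_of_pos hv0, mul_neg]

lemma exists_pow_three_mul_gt_one (hγ : 1 < γ) : ∃ ρ : ℝ, 0 < ρ ∧ ρ < 1 ∧ 1 < ρ ^ 3 * γ := by
  have hlim : Tendsto (fun ρ : ℝ => ρ ^ 3 * γ) (nhds 1) (nhds γ) := by
    simpa using ((continuous_pow 3).mul_const γ).tendsto (1 : ℝ)
  obtain ⟨ρ, ⟨hρ0, hργ⟩, hρ1⟩ :=
    ((((lt_mem_nhds one_pos).and (hlim.eventually_const_lt hγ)).filter_mono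
      nhdsWithin_le_nhds).and (self_mem_nhdsWithin (s := Iio 1))).exists
  exact ⟨ρ, hρ0, hρ1, hργ⟩

lemma eventually_sq_mul_succ_pow_le (h0 : 0 < ρ) (h1 : ρ < 1) {a : ℕ} (ha : a ≠ 0) :
    ∀ᶠ k : ℕ in atTop, ρ ^ 2 * (k + 1 : ℝ) ^ a ≤ ρ * (k : ℝ) ^ a - 1 := by
  have hlim : Tendsto (fun k : ℕ => ρ * ((k : ℝ) / (k + 1)) ^ a - (1 / ((k : ℝ) + 1)) ^ a)
      atTop (nhds (ρ * 1 ^ a - 0 ^ a)) :=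
    (((tendsto_natCast_div_add_atTop (1 : ℝ)).pow a).const_mul ρ).sub
      (tendsto_one_div_add_atTop_nhds_zero_nat.pow a)
  rw [one_pow, mul_one, zero_pow ha, sub_zero] at hlim
  have hlt : ρ ^ 2 < ρ := pow_lt_self_of_lt_one₀ h0 h1 one_lt_two
  filter_upwards [hlim.eventually_const_le hlt] with k hk
  rwa [div_pow, div_pow, one_pow, mul_div_assoc', ← sub_div, le_div_iff₀ (by positivity)] at hk

lemma ae_eventually_notMem_loneVertexEvent_rhat (hd : d ≠ 0) (h0 : 0 < ρ) (h1 : ρ < 1) (hγ : 0 < γ)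
    {a : ℕ} (ha : 1 < a * (ρ ^ 3 * γ - 1)) :
    ∀ᵐ ω ∂P, ∀ᶠ k : ℕ in atTop,
      ω ∉ M.loneVertexEvent (rhat M γ ((k + 1) ^ a)) (2 * (k + 1) ^ a) ⌈ρ * (k : ℝ) ^ a⌉₊ := by
  have := M.isProbabilityMeasure
  have ha0 : a ≠ 0 := by
    rintro rfl
    norm_num at ha
  have hpow : Tendsto (fun k : ℕ => (k + 1) ^ a) atTop atTop :=
    (tendsto_pow_atTop ha0).comp (tendsto_add_atTop_nat 1)
  obtain ⟨r₀, hr₀, hedge⟩ := M.exists_mul_pow_le_setIntegral_edgeProb h1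
  have hsum : Summable fun k : ℕ => 2 * ((k + 1 : ℕ) : ℝ) ^ (-(a * (ρ ^ 3 * γ - 1))) :=
    ((summable_nat_add_iff 1).2 (Real.summable_nat_rpow.2 (neg_lt_neg ha))).mul_left 2
  refine ae_eventually_notMem_of_measureReal_le hsum ?_
  filter_upwards [eventually_sq_mul_succ_pow_le h0 h1 ha0, hpow.eventually_ge_atTop 2,
    ((tendsto_rhat M hd γ).comp hpow).eventually_le_const hr₀] with k hk hv hsmall
  have hm : ρ ^ 2 * (((k + 1) ^ a : ℕ) : ℝ) ≤ ⌈ρ * (k : ℝ) ^ a⌉₊ - 1 := by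
    push_cast
    exact hk.trans (sub_le_sub_right (Nat.le_ceil _) 1)
  refine (measureReal_loneVertexEvent_rhat_le M hd hγ h0.le hv
    (hedge _ (rhat_pos M hγ hv) hsmall) _ hm).trans_eq ?_
  have hk0 : (0 : ℝ) < ((k + 1 : ℕ) : ℝ) := by positivity
  rw [Nat.cast_mul, Nat.cast_pow, Nat.cast_ofNat, mul_assoc, ← Real.rpow_natCast,
    ← Real.rpow_mul hk0.le, ← Real.rpow_add hk0]
  ring_nf

lemma tendsto_nthRoot {a : ℕ} (ha : a ≠ 0) : Tendsto (Nat.nthRoot a) atTop atTop :=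
  tendsto_atTop.2 fun b => (eventually_ge_atTop (b ^ a)).mono fun _ hn =>
    (Nat.le_nthRoot_iff ha).2 hn

lemma ae_eventually_critRadius_le_rhat (hd : d ≠ 0) (hγ : 1 < γ) :
    ∀ᵐ ω ∂P, ∀ᶠ n in atTop, critRadius M n ω ≤ rhat M γ n := by
  have hγ0 : 0 < γ := zero_lt_one.trans hγ
  obtain ⟨ρ, h0, h1, hργ⟩ := exists_pow_three_mul_gt_one hγ
  obtain ⟨a, ha⟩ := exists_nat_gt (1 / (ρ ^ 3 * γ - 1))
  have ha1 : 1 < a * (ρ ^ 3 * γ - 1) := (div_lt_iff₀ (sub_pos.2 hργ)).1 ha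
  have ha0 : a ≠ 0 := by
    rintro rfl
    norm_num at ha1
  have hroot := tendsto_nthRoot ha0
  have hpow : Tendsto (fun n => a.nthRoot n ^ a) atTop atTop := (tendsto_pow_atTop ha0).comp hroot
  have hpow' : Tendsto (fun n => (a.nthRoot n + 1) ^ a) atTop atTop :=
    (tendsto_pow_atTop ha0).comp ((tendsto_add_atTop_nat 1).comp hroot)
  filter_upwards [M.ae_eventually_mul_lt_N h0 h1, M.ae_eventually_N_lt_mul one_lt_two,
    ae_eventually_notMem_loneVertexEvent_rhat M hd h0 h1 hγ0 ha1] with ω hlower hupper hlone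
  filter_upwards [hpow.eventually hlower, hpow'.eventually hupper, hroot.eventually hlone,
    eventually_ge_atTop 3] with n hl hu hω hn
  have hle : a.nthRoot n ^ a ≤ n := Nat.pow_nthRoot_le (.inl ha0)
  have hlt : n < (a.nthRoot n + 1) ^ a := Nat.lt_pow_nthRoot_add_one ha0 n
  have hm : ⌈ρ * (a.nthRoot n : ℝ) ^ a⌉₊ ≤ M.N n ω :=
    (Nat.ceil_le.2 (by exact_mod_cast hl.le)).trans (M.N_mono ω hle)
  have hL : M.N n ω ≤ 2 * (a.nthRoot n + 1) ^ a :=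
    (M.N_mono ω hlt.le).trans (by exact_mod_cast hu.le)
  exact (critRadius_le_of_notMem_loneVertexEvent M (rhat_pos M hγ0 (by omega)) hm hL hω).trans
    (rhat_le_rhat M hγ0.le hn hlt.le)

lemma mul_critRadius_pow_div_log_le (hd : d ≠ 0) (hγ : 0 ≤ γ) {n : ℕ} {ω : Ω}
    (h : critRadius M n ω ≤ rhat M γ n) :
    M.α * n * critRadius M n ω ^ d / Real.log n ≤ γ := by
  have hα := M.α_pos
  have hlog := Real.log_natCast_nonneg n
  refine div_le_of_le_mul₀ hlog hγ ?_
  calc M.α * n * critRadius M n ω ^ d ≤ M.α * n * rhat M γ n ^ d := by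
        gcongr
        exact critRadius_nonneg M n ω
    _ = M.α * n * (γ * Real.log n / (M.α * n)) := by rw [rhat_pow M hd hγ]
    _ ≤ γ * Real.log n := by
        rw [mul_div_assoc', mul_div_right_comm]
        exact mul_le_of_le_one_left (by positivity) (div_self_le_one _)

end CriticalRadius

theorem critRadius_limsup_le_general (hd : d ≠ 0) (M : Model d P) :
    ∀ᵐ ω ∂P, Filter.limsup
      (fun n : ℕ => M.α * n * critRadius M n ω ^ d / Real.log n) atTop ≤ 1 := by
  refine ae_limsup_le_of_forall_lt (fun ω => ?_) fun γ hγ => ?_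
  · refine IsCoboundedUnder.of_frequently_ge (a := 0) (Frequently.of_forall fun n => ?_)
    have := M.α_pos
    have := critRadius_nonneg M n ω
    have := Real.log_natCast_nonneg n
    positivity
  · filter_upwards [ae_eventually_critRadius_le_rhat M hd hγ] with ω hω
    exact hω.mono fun n => mul_critRadius_pow_div_log_le M hd (zero_le_one.trans hγ.le)

/-- Theorem 1(i): a.s. `limsup α n d_n^d / log n ≤ 1`. -/
theorem critRadius_limsup_le (hd : 2 ≤ d) [IsProbabilityMeasure P] (M : Model d P)
    {c : ℝ} (hc : (d : ℝ) < c)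
    (hg : M.g =o[atTop] fun r : ℝ => r ^ (-c)) :
    ∀ᵐ ω ∂P, Filter.limsup
      (fun n : ℕ => M.α * n * critRadius M n ω ^ d / Real.log n) atTop ≤ 1 :=
  critRadius_limsup_le_general (by omega) M

end RCM
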